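/- Let s be a nontrivial circuit state of a polynomial automaton A of degree d. Then for every n ≥ 1 there is exactly one word v ∈ X^n such that s|_v has the same degree d as s, and for all other words u ∈ X^n of length n, the state s|_u has degree strictly less than d. -/

import Mathlib

/-- A finite invertible automaton over the alphabet `X`. -/
structure Automaton (X : Type*) where
  S : Type
  [fin : Fintype S]
  trans : S → X → S
  out : S → X → X
  inv : ∀ s : S, Function.Bijective (out s)

attribute [instance] Automaton.fin

namespace Automaton

variable {X : Type*} (A : Automaton X)

/-- The state reached from `s` after reading the finite word `v`: the restriction `s|_v`. -/
def transWord (s : A.S) (v : List X) : A.S := v.foldl A.trans s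

/-- The sequence of states visited while processing the infinite word `w` from `s`. -/
def run (s : A.S) (w : ℕ → X) : ℕ → A.S :=
  fun n => Nat.rec s (fun k sk => A.trans sk (w k)) n

/-- The action of the state `s` on infinite words. -/
def act (s : A.S) : (ℕ → X) → (ℕ → X) :=
  fun w n => A.out (A.run s w n) (w n)

/-- A state is trivial iff it acts trivially on `X^ω`. -/
def IsTrivialState (s : A.S) : Prop := A.act s = id

/-- A simple directed cycle in (the Moore diagram of) the automaton `A`. -/
def IsCycle (c : List (A.S × X)) : Prop :=
  c ≠ [] ∧ (c.map Prod.fst).Nodup ∧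
    c.Chain' (fun p q => A.trans p.1 p.2 = q.1) ∧
    ∀ h : c ≠ [], A.trans (c.getLast h).1 (c.getLast h).2 = (c.head h).1

/-- A nontrivial simple directed cycle (a cycle other than the loop at the trivial state). -/
def IsNontrivialCycle (c : List (A.S × X)) : Prop :=
  A.IsCycle c ∧ ∃ p ∈ c, ¬A.IsTrivialState p.1

/-- The edge relation of the underlying directed graph of `A`. -/
def Edge (s t : A.S) : Prop := ∃ x : X, A.trans s x = t

/-- There is a directed path from the cycle `c₁` to the cycle `c₂`. -/
def ConnectedTo (c₁ c₂ : List (A.S × X)) : Prop :=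
  ∃ s t : A.S, s ∈ c₁.map Prod.fst ∧ t ∈ c₂.map Prod.fst ∧
    Relation.ReflTransGen A.Edge s t

/-- `A` is a polynomial automaton: distinct nontrivial simple directed cycles are disjoint. -/
def IsPolynomial : Prop :=
  ∀ c₁ c₂ : List (A.S × X), A.IsNontrivialCycle c₁ → A.IsNontrivialCycle c₂ →
    (∃ s, s ∈ c₁.map Prod.fst ∧ s ∈ c₂.map Prod.fst) →
    ∃ n : ℕ, c₂ = c₁.rotate n

/-- At most `t` pairwise distinct nontrivial cycles of `A` can be connected by directed
paths into a chain. -/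
def ChainLe (t : ℕ) : Prop :=
  ∀ (r : ℕ) (c : ℕ → List (A.S × X)),
    (∀ i < r, A.IsNontrivialCycle (c i)) →
    (∀ i < r, ∀ j < r, i ≠ j → ¬∃ n : ℕ, c j = (c i).rotate n) →
    (∀ i, i + 1 < r → A.ConnectedTo (c i) (c (i + 1))) →
    r ≤ t

end Automaton

/-- `Pol m`: the set of transformations of `X^ω` arising as states of polynomial
automata of degree `≤ m` (i.e. with at most `m + 1` nontrivial cycles in a chain). -/
def Pol (X : Type*) (m : ℕ) : Set ((ℕ → X) → (ℕ → X)) :=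
  {f | ∃ (A : Automaton X) (s : A.S), A.IsPolynomial ∧ A.ChainLe (m + 1) ∧ A.act s = f}

/-- `Pol(-1)`: the set of finitary transformations, states of polynomial automata with
no nontrivial cycles. -/
def Finitary (X : Type*) : Set ((ℕ → X) → (ℕ → X)) :=
  {f | ∃ (A : Automaton X) (s : A.S), A.IsPolynomial ∧ A.ChainLe 0 ∧ A.act s = f}

/-- `f` has degree exactly `d` in the polynomial hierarchy: `f ∈ Pol(d) ∖ Pol(d-1)`. -/
def HasDegree {X : Type*} (f : (ℕ → X) → (ℕ → X)) (d : ℕ) : Prop :=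
  f ∈ Pol X d ∧ f ∉ Finitary X ∧ ∀ d' < d, f ∉ Pol X d'

/-- `f` has degree strictly less than `d` in the hierarchy. -/
def DegreeLt {X : Type*} (f : (ℕ → X) → (ℕ → X)) (d : ℕ) : Prop :=
  match d with
  | 0 => f ∈ Finitary X
  | d' + 1 => f ∈ Pol X d'

namespace Automaton

section Helpers

variable {X : Type*}

theorem transWord_append (A : Automaton X) (s : A.S) (u v : List X) :
    A.transWord s (u ++ v) = A.transWord (A.transWord s u) v := by
  simp [transWord]

theorem transWord_cons (A : Automaton X) (s : A.S) (x : X) (v : List X) :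
    A.transWord s (x :: v) = A.transWord (A.trans s x) v := rfl

/-- Prepend a letter to an infinite word. -/
def consW (x : X) (w : ℕ → X) : ℕ → X
  | 0 => x
  | n + 1 => w n

theorem run_consW (A : Automaton X) (s : A.S) (x : X) (w : ℕ → X) (n : ℕ) :
    A.run s (consW x w) (n + 1) = A.run (A.trans s x) w n := by
  induction n with
  | zero => rfl
  | succ n ih =>
    change A.trans (A.run s (consW x w) (n + 1)) (w n) = A.trans (A.run (A.trans s x) w n) (w n)
    rw [ih]

theorem act_trans (A : Automaton X) (s : A.S) (x : X) (w : ℕ → X) (n : ℕ) :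
    A.act (A.trans s x) w n = A.act s (consW x w) (n + 1) := by
  change A.out (A.run (A.trans s x) w n) (w n) = A.out (A.run s (consW x w) (n + 1)) (w n)
  rw [run_consW]

theorem act_transWord_congr (A B : Automaton X) (v : List X) :
    ∀ (s : A.S) (t : B.S), A.act s = B.act t →
      A.act (A.transWord s v) = B.act (B.transWord t v) := by
  induction v with
  | nil => intro s t h; exact h
  | cons x v ih =>
    intro s t h
    apply ih
    funext w n
    rw [act_trans, act_trans, h]

theorem trivial_trans (A : Automaton X) (s : A.S) (h : A.IsTrivialState s) (x : X) :
    A.IsTrivialState (A.trans s x) := by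
  unfold IsTrivialState at *
  funext w n
  rw [act_trans, h]
  rfl

theorem trivial_transWord (A : Automaton X) (v : List X) :
    ∀ s : A.S, A.IsTrivialState s → A.IsTrivialState (A.transWord s v) := by
  induction v with
  | nil => intro s h; exact h
  | cons x v ih => intro s h; exact ih _ (A.trivial_trans s h x)

/-- The list of edges traversed while reading a word. -/
def path (A : Automaton X) : A.S → List X → List (A.S × X)
  | _, [] => []
  | s, x :: w => (s, x) :: path A (A.trans s x) w

theorem path_chain (A : Automaton X) (w : List X) : ∀ (s : A.S),
    (A.path s w).IsChain (fun p q => A.trans p.1 p.2 = q.1) := by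
  induction w with
  | nil => intro s; simp [path]
  | cons x w ih =>
    intro s
    cases w with
    | nil => simp [path]
    | cons y w =>
      have := ih (A.trans s x)
      simp only [path] at this ⊢
      exact List.IsChain.cons_cons rfl this

theorem path_last (A : Automaton X) (w : List X) : ∀ (s : A.S) (h : A.path s w ≠ []),
    A.trans ((A.path s w).getLast h).1 ((A.path s w).getLast h).2 = A.transWord s w := by
  induction w with
  | nil => intro s h; simp [path] at h
  | cons x w ih =>
    intro s h
    cases w with
    | nil => simp [path, transWord]
    | cons y w =>
      have := ih (A.trans s x) (by simp [path])
      rw [transWord_cons, ← this]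
      simp [path]

theorem exists_simple (A : Automaton X) (a : List X) : ∀ (s : A.S),
    ∃ a', A.transWord s a' = A.transWord s a ∧
      ((A.path s a').map Prod.fst ++ [A.transWord s a]).Nodup := by
  have split : ∀ (b : List X) (s q : A.S),
      ((A.path s b).map Prod.fst ++ [A.transWord s b]).Nodup →
      q ∈ (A.path s b).map Prod.fst ++ [A.transWord s b] →
      ∃ b', A.transWord q b' = A.transWord s b ∧
        ((A.path q b').map Prod.fst ++ [A.transWord s b]).Nodup := by
    intro b
    induction b with
    | nil =>
      intro s q _ hq
      simp [path, transWord] at hq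
      subst hq
      exact ⟨[], rfl, by simp [path]⟩
    | cons y b ih =>
      intro s q hn hq
      by_cases hqs : q = s
      · subst hqs
        exact ⟨y :: b, rfl, hn⟩
      · simp only [path, List.map_cons, List.cons_append, List.mem_cons, hqs, false_or,
          transWord_cons, List.nodup_cons] at hq hn ⊢
        exact ih _ _ hn.2 hq
  induction a with
  | nil => intro s; exact ⟨[], rfl, by simp [path]⟩
  | cons y a ih =>
    intro s
    obtain ⟨b, hb, hn⟩ := ih (A.trans s y)
    rw [transWord_cons]
    by_cases hs : s ∈ (A.path (A.trans s y) b).map Prod.fst ++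
        [A.transWord (A.trans s y) a]
    · rw [← hb] at hs hn ⊢
      exact split b _ s hn hs
    · refine ⟨y :: b, hb, ?_⟩
      simp only [path, List.map_cons, List.cons_append, List.nodup_cons]
      exact ⟨hs, hn⟩

theorem exists_cycle (A : Automaton X) (t : A.S) (x : X) (a : List X)
    (h : A.transWord t (x :: a) = t) : ∃ l, A.IsCycle ((t, x) :: l) := by
  obtain ⟨b, hb, hn⟩ := A.exists_simple a (A.trans t x)
  rw [transWord_cons] at h
  rw [h] at hb hn
  refine ⟨A.path (A.trans t x) b, by simp, ?_, ?_, ?_⟩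
  · have := (List.perm_append_singleton t ((A.path (A.trans t x) b).map Prod.fst)).nodup_iff.1 hn
    simpa using this
  · exact A.path_chain (x :: b) t
  · intro hne
    exact (A.path_last (x :: b) t hne).trans hb

theorem letter_unique (A : Automaton X) (hA : A.IsPolynomial) (t : A.S)
    (ht : ¬A.IsTrivialState t) (x y : X) (a b : List X)
    (ha : A.transWord t (x :: a) = t) (hb : A.transWord t (y :: b) = t) : x = y := by
  obtain ⟨l, hl⟩ := A.exists_cycle t x a ha
  obtain ⟨m, hm⟩ := A.exists_cycle t y b hb
  obtain ⟨n, hn⟩ := hA _ _ ⟨hl, (t, x), by simp, ht⟩ ⟨hm, (t, y), by simp, ht⟩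
    ⟨t, by simp, by simp⟩
  have hmem : (t, y) ∈ (t, x) :: l := by
    rw [← List.mem_rotate (n := n), ← hn]; simp
  rcases List.mem_cons.1 hmem with h | h
  · exact ((Prod.ext_iff.1 h).2).symm
  · exfalso
    have := hl.2.1
    simp only [List.map_cons, List.nodup_cons] at this
    exact this.1 (List.mem_map.2 ⟨_, h, rfl⟩)

theorem word_unique (A : Automaton X) (hA : A.IsPolynomial) (u : List X) :
    ∀ (v : List X) (t : A.S) (a b : List X), ¬A.IsTrivialState t → u.length = v.length →
    A.transWord t (u ++ a) = t → A.transWord t (v ++ b) = t → u = v := by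
  induction u with
  | nil => intro v t a b _ hl _ _; exact (List.length_eq_zero_iff.1 hl.symm).symm
  | cons x u ih =>
    intro v t a b ht hl ha hb
    cases v with
    | nil => simp at hl
    | cons y v =>
      have hxy := A.letter_unique hA t ht x y _ _ ha hb
      subst hxy
      rw [List.cons_append, transWord_cons] at ha hb
      congr 1
      refine ih v (A.trans t x) (a ++ [x]) (b ++ [x]) ?_ (by simpa using hl) ?_ ?_
      · intro htr
        apply ht
        rw [← ha]
        exact A.trivial_transWord _ _ htr
      · rw [← List.append_assoc, transWord_append, ha]; rfl
      · rw [← List.append_assoc, transWord_append, hb]; rfl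

theorem chain_prefix (A : Automaton X) (l : List (A.S × X)) :
    ∀ (q : A.S × X) (m : List (A.S × X)),
    (l ++ q :: m).IsChain (fun p q => A.trans p.1 p.2 = q.1) →
    A.transWord ((l ++ q :: m).head (by simp)).1 (l.map Prod.snd) = q.1 := by
  induction l with
  | nil => intro q m _; rfl
  | cons p l ih =>
    intro q m h
    have h2 := ih q m (by
      have := h.tail
      simpa using this)
    rw [← h2]
    simp only [List.cons_append, List.head_cons, List.map_cons, transWord_cons]
    congr 1
    cases l with
    | nil => simp at h ⊢; exact h.1
    | cons p' l => simp at h ⊢; exact h.1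

theorem chain_full (A : Automaton X) (l : List (A.S × X)) :
    ∀ (p : A.S × X), (p :: l).IsChain (fun p q => A.trans p.1 p.2 = q.1) →
    A.transWord p.1 ((p :: l).map Prod.snd) =
      A.trans ((p :: l).getLast (by simp)).1 ((p :: l).getLast (by simp)).2 := by
  induction l with
  | nil => intro p _; rfl
  | cons q l ih =>
    intro p h
    rw [List.isChain_cons_cons] at h
    rw [List.map_cons, transWord_cons, h.1, ih q h.2]
    simp

theorem closed_word (A : Automaton X) (s : A.S) (c : List (A.S × X)) (hc : A.IsCycle c)
    (hs : s ∈ c.map Prod.fst) : ∃ w : List X, w ≠ [] ∧ A.transWord s w = s := by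
  obtain ⟨⟨s', x⟩, hp, rfl⟩ := List.mem_map.1 hs
  obtain ⟨l, m, rfl⟩ := List.append_of_mem hp
  obtain ⟨hne, _, hch, hlast⟩ := hc
  refine ⟨((s', x) :: m).map Prod.snd ++ l.map Prod.snd, by simp, ?_⟩
  have h1 := A.chain_prefix l _ m hch
  have h2 := A.chain_full m (s', x) (List.IsChain.right_of_append hch)
  have h3 := hlast hne
  rw [transWord_append, h2]
  rw [List.getLast_append_of_ne_nil _ (by simp)] at h3
  rw [h3, h1]

/-- The subautomaton of states reachable from `r`. -/
noncomputable def sub (B : Automaton X) (r : B.S) : Automaton X where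
  S := {q : B.S // ∃ z : List X, B.transWord r z = q}
  fin := Fintype.ofFinite _
  trans := fun q x => ⟨B.trans q.1 x, by
    obtain ⟨z, hz⟩ := q.2
    exact ⟨z ++ [x], by rw [transWord_append, hz]; rfl⟩⟩
  out := fun q => B.out q.1
  inv := fun q => B.inv q.1

/-- The embedding of the states of the subautomaton. -/
def subVal (B : Automaton X) (r : B.S) (q : (B.sub r).S) : B.S := Subtype.val q

theorem subVal_inj (B : Automaton X) (r : B.S) : Function.Injective (B.subVal r) :=
  Subtype.val_injective

theorem subVal_trans (B : Automaton X) (r : B.S) (q : (B.sub r).S) (x : X) :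
    B.subVal r ((B.sub r).trans q x) = B.trans (B.subVal r q) x := rfl

theorem sub_run (B : Automaton X) (r : B.S) (q : (B.sub r).S) (w : ℕ → X) (n : ℕ) :
    B.subVal r ((B.sub r).run q w n) = B.run (B.subVal r q) w n := by
  induction n with
  | zero => rfl
  | succ n ih =>
    change B.trans (B.subVal r ((B.sub r).run q w n)) (w n) = B.trans (B.run _ w n) (w n)
    rw [ih]

theorem sub_act (B : Automaton X) (r : B.S) (q : (B.sub r).S) :
    (B.sub r).act q = B.act (B.subVal r q) := by
  funext w n
  change B.out (B.subVal r ((B.sub r).run q w n)) (w n) = _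
  rw [sub_run]; rfl

/-- The image of an edge list of the subautomaton. -/
def subMap (B : Automaton X) (r : B.S) (c : List ((B.sub r).S × X)) : List (B.S × X) :=
  c.map (Prod.map (B.subVal r) id)

theorem subMap_inj (B : Automaton X) (r : B.S) : Function.Injective (B.subMap r) :=
  List.map_injective_iff.2 ((B.subVal_inj r).prodMap Function.injective_id)

theorem subMap_fst (B : Automaton X) (r : B.S) (c : List ((B.sub r).S × X)) :
    (B.subMap r c).map Prod.fst = (c.map Prod.fst).map (B.subVal r) := by
  simp [subMap, Function.comp_def]

theorem subMap_rotate (B : Automaton X) (r : B.S) (c c' : List ((B.sub r).S × X)) (n : ℕ) :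
    B.subMap r c' = (B.subMap r c).rotate n ↔ c' = c.rotate n := by
  rw [← (B.subMap_inj r).eq_iff]
  simp [subMap, List.map_rotate]

theorem subMap_cycle (B : Automaton X) (r : B.S) (c : List ((B.sub r).S × X))
    (h : (B.sub r).IsNontrivialCycle c) : B.IsNontrivialCycle (B.subMap r c) := by
  obtain ⟨⟨hne, hnd, hch, hl⟩, p, hp, hpt⟩ := h
  refine ⟨⟨by simpa [subMap] using hne, ?_, ?_, ?_⟩, _, List.mem_map.2 ⟨p, hp, rfl⟩, ?_⟩
  · rw [subMap_fst]; exact hnd.map (B.subVal_inj r)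
  · refine List.isChain_map_of_isChain _ ?_ hch
    intro a b hab
    change B.trans (B.subVal r a.1) a.2 = B.subVal r b.1
    rw [← hab]; rfl
  · intro h
    have := hl hne
    simp only [subMap, List.getLast_map, List.head_map, Prod.map_fst, Prod.map_snd, id]
    rw [← this]; rfl
  · unfold IsTrivialState at *
    rw [sub_act] at hpt
    exact hpt

theorem sub_polynomial (B : Automaton X) (r : B.S) (hB : B.IsPolynomial) :
    (B.sub r).IsPolynomial := by
  intro c₁ c₂ h₁ h₂ ⟨s, hs₁, hs₂⟩
  obtain ⟨n, hn⟩ := hB _ _ (B.subMap_cycle r _ h₁) (B.subMap_cycle r _ h₂)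
    ⟨B.subVal r s, by rw [subMap_fst]; exact List.mem_map_of_mem hs₁,
      by rw [subMap_fst]; exact List.mem_map_of_mem hs₂⟩
  exact ⟨n, (B.subMap_rotate r _ _ n).1 hn⟩

theorem reach_transWord (B : Automaton X) (v : List X) : ∀ s : B.S,
    Relation.ReflTransGen B.Edge s (B.transWord s v) := by
  induction v with
  | nil => intro s; exact .refl
  | cons x v ih => intro s; exact .head ⟨x, rfl⟩ (ih _)

theorem sub_chainLe (B : Automaton X) (t : B.S) (u : List X) (d : ℕ) (hB : B.ChainLe (d + 1))
    (c₀ : List (B.S × X)) (hc₀ : B.IsNontrivialCycle c₀) (ht : t ∈ c₀.map Prod.fst)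
    (hno : ∀ z, B.transWord (B.transWord t u) z ≠ t) :
    (B.sub (B.transWord t u)).ChainLe d := by
  intro r c hc hdist hconn
  have hnot : ∀ i, t ∉ (B.subMap _ (c i)).map Prod.fst := by
    intro i h
    rw [subMap_fst] at h
    obtain ⟨q, _, hq⟩ := List.mem_map.1 h
    obtain ⟨z, hz⟩ := q.2
    exact hno z (hz.trans hq)
  have hrot : ∀ (l : List (B.S × X)) (n : ℕ),
      t ∈ (l.rotate n).map Prod.fst ↔ t ∈ l.map Prod.fst := by
    intro l n
    rw [List.map_rotate, List.mem_rotate]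
  have key := hB (r + 1) (fun i => Nat.casesOn i c₀ (fun j => B.subMap _ (c j))) ?_ ?_ ?_
  · omega
  · intro i hi
    cases i with
    | zero => exact hc₀
    | succ i => exact B.subMap_cycle _ _ (hc i (by omega))
  · intro i hi j hj hij
    rintro ⟨n, hn⟩
    cases i with
    | zero =>
      cases j with
      | zero => exact hij rfl
      | succ j =>
        apply hnot j
        change B.subMap _ (c j) = c₀.rotate n at hn
        rw [hn, hrot]; exact ht
    | succ i =>
      cases j with
      | zero =>
        apply hnot i
        change c₀ = (B.subMap _ (c i)).rotate n at hn
        rw [← hrot _ n, ← hn]; exact ht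
      | succ j =>
        exact hdist i (by omega) j (by omega) (by omega) ⟨n, (B.subMap_rotate _ _ _ n).1 hn⟩
  · intro i hi
    cases i with
    | zero =>
      obtain ⟨_, p, hp, _⟩ := hc 0 (by omega)
      refine ⟨t, B.subVal _ p.1, ht, ?_, ?_⟩
      · change _ ∈ (B.subMap _ (c 0)).map Prod.fst
        rw [subMap_fst]
        exact List.mem_map_of_mem (List.mem_map_of_mem hp)
      · obtain ⟨z, hz⟩ := p.1.2
        have := B.reach_transWord (u ++ z) t
        rw [transWord_append, hz] at this
        exact this
    | succ i =>
      obtain ⟨a, b, ha, hb, hab⟩ := hconn i (by omega)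
      refine ⟨B.subVal _ a, B.subVal _ b, ?_, ?_, ?_⟩
      · change _ ∈ (B.subMap _ (c i)).map Prod.fst
        rw [subMap_fst]
        exact List.mem_map_of_mem ha
      · change _ ∈ (B.subMap _ (c (i + 1))).map Prod.fst
        rw [subMap_fst]
        exact List.mem_map_of_mem hb
      · refine hab.lift _ ?_
        rintro p q ⟨x, rfl⟩
        exact ⟨x, rfl⟩

/-- Powers of a word. -/
def powW (w : List X) : ℕ → List X
  | 0 => []
  | n + 1 => powW w n ++ w

theorem powW_add (w : List X) (m n : ℕ) : powW w (m + n) = powW w m ++ powW w n := by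
  induction n with
  | zero => simp [powW]
  | succ n ih => rw [← Nat.add_assoc]; simp [powW, ih]

theorem powW_length (w : List X) (hw : w ≠ []) (n : ℕ) : n ≤ (powW w n).length := by
  induction n with
  | zero => simp
  | succ n ih =>
    have := List.length_pos_iff.2 hw
    simp only [powW, List.length_append]; omega

theorem powW_fix (A : Automaton X) (s : A.S) (w : List X) (h : A.transWord s w = s) (n : ℕ) :
    A.transWord s (powW w n) = s := by
  induction n with
  | zero => rfl
  | succ n ih => rw [powW, transWord_append, ih, h]

theorem exists_periodic (B : Automaton X) (t : B.S) (w : List X) (hw : w ≠ []) :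
    ∃ k m, powW w m ≠ [] ∧
      B.transWord (B.transWord t (powW w k)) (powW w m) = B.transWord t (powW w k) := by
  obtain ⟨i, j, hij, h⟩ :=
    Finite.exists_ne_map_eq_of_infinite (fun k => B.transWord t (powW w k))
  have main : ∀ i j : ℕ, i < j → B.transWord t (powW w i) = B.transWord t (powW w j) →
      ∃ k m, powW w m ≠ [] ∧
      B.transWord (B.transWord t (powW w k)) (powW w m) = B.transWord t (powW w k) := by
    intro i j hij h
    refine ⟨i, j - i, ?_, ?_⟩
    · intro h0
      have := powW_length w hw (j - i)
      rw [h0] at this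
      simp at this; omega
    · rw [← transWord_append, ← powW_add, h]
      congr 2; omega
  rcases lt_or_gt_of_ne hij with h' | h'
  · exact main i j h' h
  · exact main j i h' h.symm

end Helpers

end Automaton

theorem Pol_restrict {X : Type*} (A : Automaton X) (s : A.S) (v : List X) (m : ℕ)
    (h : A.act s ∈ Pol X m) : A.act (A.transWord s v) ∈ Pol X m := by
  obtain ⟨B, t, h1, h2, h3⟩ := h
  exact ⟨B, B.transWord t v, h1, h2, B.act_transWord_congr A v t s h3⟩

theorem Finitary_restrict {X : Type*} (A : Automaton X) (s : A.S) (v : List X)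
    (h : A.act s ∈ Finitary X) : A.act (A.transWord s v) ∈ Finitary X := by
  obtain ⟨B, t, h1, h2, h3⟩ := h
  exact ⟨B, B.transWord t v, h1, h2, B.act_transWord_congr A v t s h3⟩

theorem DegreeLt_of {X : Type*} (B : Automaton X) (t : B.S) (d : ℕ) (h1 : B.IsPolynomial)
    (h2 : B.ChainLe d) : DegreeLt (B.act t) d := by
  cases d with
  | zero => exact ⟨B, t, h1, h2, rfl⟩
  | succ d => exact ⟨B, t, h1, h2, rfl⟩

theorem DegreeLt_not {X : Type*} (f : (ℕ → X) → (ℕ → X)) (d : ℕ) (h : DegreeLt f d)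
    (h' : HasDegree f d) : False := by
  cases d with
  | zero => exact h'.2.1 h
  | succ d => exact h'.2.2 d (Nat.lt_succ_self d) h

/-- Let `s` be a nontrivial circuit state of a polynomial automaton `A`, of degree `d`.
Then for every `n ≥ 1` there is exactly one word `v ∈ X^n` with `s|_v` of degree `d`,
and `s|_u` has degree strictly less than `d` for every other word `u ∈ X^n`. -/
theorem stmt9 {X : Type*} [Fintype X] (A : Automaton X) (hA : A.IsPolynomial)
    (s : A.S) (hs_nontriv : ¬A.IsTrivialState s)
    (hs_circuit : ∃ c : List (A.S × X), A.IsCycle c ∧ s ∈ c.map Prod.fst)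
    (d : ℕ) (hdeg : HasDegree (A.act s) d) :
    ∀ n : ℕ, 1 ≤ n →
      ∃ v : List X, v.length = n ∧ HasDegree (A.act (A.transWord s v)) d ∧
        (∀ v' : List X, v'.length = n → HasDegree (A.act (A.transWord s v')) d → v' = v) ∧
        ∀ u : List X, u.length = n → u ≠ v → DegreeLt (A.act (A.transWord s u)) d := by

  intro n _
  obtain ⟨c, hc, hsc⟩ := hs_circuit
  obtain ⟨w, hw, hws⟩ := A.closed_word s c hc hsc
  obtain ⟨B, t₀, hB, hBd, hact₀⟩ := hdeg.1
  obtain ⟨k, m, hm, hper⟩ := B.exists_periodic t₀ w hw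
  obtain ⟨t, ht⟩ : ∃ t, t = B.transWord t₀ (Automaton.powW w k) := ⟨_, rfl⟩
  rw [← ht] at hper
  have hact : B.act t = A.act s := by
    rw [ht, B.act_transWord_congr A _ t₀ s hact₀, A.powW_fix s w hws]
  have htn : ¬B.IsTrivialState t := by
    unfold Automaton.IsTrivialState at *
    rwa [hact]
  obtain ⟨W, hWB, hWA, hWl⟩ : ∃ W, B.transWord t W = t ∧ A.transWord s W = s ∧ n ≤ W.length :=
    ⟨Automaton.powW (Automaton.powW w m) n, B.powW_fix t _ hper n,
      A.powW_fix s _ (A.powW_fix s w hws m) n, Automaton.powW_length _ hm n⟩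
  obtain ⟨c₀, hc₀, htc₀⟩ : ∃ c₀, B.IsNontrivialCycle c₀ ∧ t ∈ c₀.map Prod.fst := by
    cases h : Automaton.powW w m with
    | nil => exact absurd h hm
    | cons x a =>
      rw [h] at hper
      obtain ⟨l, hl⟩ := B.exists_cycle t x a hper
      exact ⟨_, ⟨hl, (t, x), by simp, htn⟩, by simp⟩
  have hlow : ∀ u : List X, u.length = n → u ≠ W.take n →
      DegreeLt (A.act (A.transWord s u)) d := by
    intro u hu hne
    have hno : ∀ z, B.transWord (B.transWord t u) z ≠ t := by
      intro z hz
      apply hne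
      refine B.word_unique hB u (W.take n) t z (W.drop n) htn ?_ ?_ ?_
      · rw [hu, List.length_take]; omega
      · rw [B.transWord_append]; exact hz
      · rw [List.take_append_drop]; exact hWB
    have := DegreeLt_of (B.sub (B.transWord t u)) ⟨B.transWord t u, [], rfl⟩ d
      (B.sub_polynomial _ hB) (B.sub_chainLe t u d hBd c₀ hc₀ htc₀ hno)
    have e := B.sub_act (B.transWord t u) ⟨B.transWord t u, [], rfl⟩
    replace this := (congrArg (fun f => DegreeLt f d) e).mp this
    change DegreeLt (B.act (B.transWord t u)) d at this
    rwa [B.act_transWord_congr A u t s hact] at this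
  have hback : A.transWord (A.transWord s (W.take n)) (W.drop n) = s := by
    rw [← A.transWord_append, List.take_append_drop, hWA]
  refine ⟨W.take n, by rw [List.length_take]; omega, ⟨?_, ?_, ?_⟩, ?_, hlow⟩
  · exact Pol_restrict A s _ d hdeg.1
  · intro h
    apply hdeg.2.1
    have := Finitary_restrict A _ (W.drop n) h
    rwa [hback] at this
  · intro d' hd' h
    apply hdeg.2.2 d' hd'
    have := Pol_restrict A _ (W.drop n) d' h
    rwa [hback] at this
  · intro v' hv' hdv'
    by_contra hne
    exact DegreeLt_not _ d (hlow v' hv' hne) hdv'
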